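/- Let X, Y ⊆ ω. There exists an embedding of pcas of B^X into K1^Y if and only if the double Turing jump X'' is Turing reducible to Y. In particular, for every X there is an embedding B^X ↪ K1^{X''}, and conversely any embedding B^X ↪ K1^Y implies X'' ≤_T Y. -/

import Mathlib

namespace PCAEmb

/-! ### Oracle computability -/

/-- Codes for partial functions computable relative to an oracle. -/
inductive OCode : Type
  | zero : OCode
  | succ : OCode
  | left : OCode
  | right : OCode
  | oracle : OCode
  | pair : OCode → OCode → OCode
  | comp : OCode → OCode → OCode
  | prec : OCode → OCode → OCode
  | rfind' : OCode → OCode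

/-- Evaluation of an oracle code, relative to a (partial) oracle `O`. -/
def evalo (O : ℕ →. ℕ) : OCode → ℕ →. ℕ
  | .zero => pure 0
  | .succ => Nat.succ
  | .left => ↑fun n : ℕ => n.unpair.1
  | .right => ↑fun n : ℕ => n.unpair.2
  | .oracle => O
  | .pair cf cg => fun n => Nat.pair <$> evalo O cf n <*> evalo O cg n
  | .comp cf cg => fun n => evalo O cg n >>= evalo O cf
  | .prec cf cg =>
      Nat.unpaired fun a n =>
        n.rec (evalo O cf a) fun y IH => do
          let i ← IH
          evalo O cg (Nat.pair a (Nat.pair y i))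
  | .rfind' cf =>
      Nat.unpaired fun a m =>
        (Nat.rfind fun n => (fun x => x = 0) <$> evalo O cf (Nat.pair a (n + m))).map (· + m)

/-- The standard numbering of oracle codes. -/
def OCode.ofNat : ℕ → OCode
  | 0 => .zero
  | 1 => .succ
  | 2 => .left
  | 3 => .right
  | 4 => .oracle
  | n + 5 =>
    match n % 4 with
    | 0 => .pair (OCode.ofNat (n / 4).unpair.1) (OCode.ofNat (n / 4).unpair.2)
    | 1 => .comp (OCode.ofNat (n / 4).unpair.1) (OCode.ofNat (n / 4).unpair.2)
    | 2 => .prec (OCode.ofNat (n / 4).unpair.1) (OCode.ofNat (n / 4).unpair.2)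
    | _ => .rfind' (OCode.ofNat (n / 4).unpair.1)
  decreasing_by
    all_goals
      have h1 := Nat.unpair_left_le (n / 4)
      have h2 := Nat.unpair_right_le (n / 4)
      have h3 := Nat.div_le_self n 4
      omega

/-- The `e`-th Turing functional with oracle `O` : `Φ_e^O`. -/
def phi (O : ℕ →. ℕ) (e : ℕ) : ℕ →. ℕ := evalo O (OCode.ofNat e)

/-- The characteristic function of a set of naturals, as a (total) partial function. -/
noncomputable def chi (X : Set ℕ) : ℕ →. ℕ :=
  fun n => Part.some (X.indicator (fun _ => 1) n)

/-- `ψ` is partial computable relative to the oracle `O`. -/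
def RecursiveIn (O : ℕ →. ℕ) (ψ : ℕ →. ℕ) : Prop := ∃ c : OCode, evalo O c = ψ

/-- Turing reducibility of sets of naturals. -/
def TuringLE (X Y : Set ℕ) : Prop := RecursiveIn (chi Y) (chi X)

/-- A total function `d : ℕ → ℕ` is `Y`-computable. -/
def ComputableIn (Y : Set ℕ) (d : ℕ → ℕ) : Prop :=
  RecursiveIn (chi Y) (fun n => Part.some (d n))

/-- A binary relation on `ℕ` is `Y`-c.e. -/
def CEIn (Y : Set ℕ) (R : ℕ → ℕ → Prop) : Prop :=
  ∃ c : OCode, ∀ n m, R n m ↔ (evalo (chi Y) c (Nat.pair n m)).Dom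

/-- A set `W ⊆ ℕ` is `Y`-c.e. -/
def CE1In (Y : Set ℕ) (W : Set ℕ) : Prop :=
  ∃ c : OCode, ∀ n, n ∈ W ↔ (evalo (chi Y) c n).Dom

/-- The canonical finite set `D_u` with code `u` (binary coding). -/
def Du (u : ℕ) : Set ℕ := {k | u.testBit k}

/-- Enumeration reducibility: `Z ≤ₑ Y`. -/
def EnumLE (Z Y : Set ℕ) : Prop :=
  ∃ W : Set ℕ, CE1In ∅ W ∧ ∀ x, x ∈ Z ↔ ∃ u, Nat.pair x u ∈ W ∧ Du u ⊆ Y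

/-- The Turing jump `X'` of a set `X`. -/
def jump (X : Set ℕ) : Set ℕ := {e | (phi (chi X) e e).Dom}

/-- The halting set `K = {e : φ_e(e)↓}`. -/
def Khalt : Set ℕ := jump ∅

/-! ### Partial combinatory algebras -/

/-- `k·a·b` as a partial element. -/
def app2 {α : Type*} (app : α → α → Part α) (a b c : α) : Part α :=
  (app a b).bind fun x => app x c

/-- `s·a·b·c` as a partial element. -/
def app3 {α : Type*} (app : α → α → Part α) (a b c d : α) : Part α :=
  (app2 app a b c).bind fun x => app x d

/-- A partial applicative structure is a pca if it has (distinct) combinators `s` and `k`. -/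
def IsPCA {α : Type*} (app : α → α → Part α) : Prop :=
  ∃ s k : α, s ≠ k ∧
    (∀ a b : α, app2 app k a b = Part.some a) ∧
    (∀ a b : α, (app2 app s a b).Dom) ∧
    (∀ a b c : α,
      app3 app s a b c = (app a c).bind fun x => (app b c).bind fun y => app x y)

/-- An embedding of partial combinatory algebras: an injection that preserves
(defined) application. -/
def IsPCAEmbedding {α β : Type*} (appA : α → α → Part α) (appB : β → β → Part β)
    (f : α → β) : Prop :=
  Function.Injective f ∧ ∀ a a' c : α, c ∈ appA a a' → f c ∈ appB (f a) (f a')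

/-! ### Partial numberings -/

/-- `γ : ℕ ⇀ α` is a partial numbering (i.e. surjective). -/
def IsNumbering {α : Type*} (γ : ℕ →. α) : Prop := ∀ a : α, ∃ n, a ∈ γ n

/-- `d` is an `(a⊥, a⊤)`-decider for `X` with respect to `γ`. -/
def IsDecider {α : Type*} (γ : ℕ →. α) (abot atop : α) (X : Set ℕ) (d : ℕ → ℕ) : Prop :=
  ∀ n, (n ∉ X → γ (d n) = Part.some abot) ∧ (n ∈ X → γ (d n) = Part.some atop)

/-- `γ` has `Y`-c.e. inequivalence. -/
def CEInequiv {α : Type*} (Y : Set ℕ) (γ : ℕ →. α) : Prop :=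
  ∃ R : ℕ → ℕ → Prop, CEIn Y R ∧
    ∀ n m, (γ n).Dom → (γ m).Dom → (R n m ↔ γ n ≠ γ m)

/-- `γ` is a `Y`-effectively pca-valued partial numbering: the application is
represented on codes by a partial `Y`-computable function `ψ`. -/
def EffValued {α : Type*} (Y : Set ℕ) (app : α → α → Part α) (γ : ℕ →. α) : Prop :=
  ∃ ψ : ℕ →. ℕ, RecursiveIn (chi Y) ψ ∧
    ∀ (n m : ℕ) (a b c : α), a ∈ γ n → b ∈ γ m → c ∈ app a b →
      ∃ j, j ∈ ψ (Nat.pair n m) ∧ c ∈ γ j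

/-- `γ` is a strongly `Y`-effectively pca-valued partial numbering. -/
def StrongEffValued {α : Type*} (Y : Set ℕ) (app : α → α → Part α) (γ : ℕ →. α) : Prop :=
  ∃ ψ : ℕ →. ℕ, RecursiveIn (chi Y) ψ ∧
    (∀ (n m : ℕ) (a b c : α), a ∈ γ n → b ∈ γ m → c ∈ app a b →
      ∃ j, j ∈ ψ (Nat.pair n m) ∧ c ∈ γ j) ∧
    (∀ (n m k l : ℕ) (a b a' b' c : α), a ∈ γ n → b ∈ γ m → a' ∈ γ k → b' ∈ γ l →
      c ∈ app a b → c ∈ app a' b' → ψ (Nat.pair n m) = ψ (Nat.pair k l))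

/-! ### The models -/

/-- Kleene's first model relativized to `X`: application `n · m = Φ_n^X(m)`. -/
noncomputable def k1App (X : Set ℕ) : ℕ → ℕ → Part ℕ := fun n m => phi (chi X) n m

/-- A total function as a partial function. -/
def toPFun (g : ℕ → ℕ) : ℕ →. ℕ := fun n => Part.some (g n)

/-- Join `f ⊕ g` of two partial functions. -/
def pjoin (f g : ℕ →. ℕ) : ℕ →. ℕ := fun n =>
  if n % 2 = 0 then f (n / 2) else g (n / 2)

/-- The totalization of a partial function, as a partial element of `ℕ → ℕ`:
defined iff `ψ` is total. -/
def partToTotal (ψ : ℕ →. ℕ) : Part (ℕ → ℕ) :=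
  ⟨∀ n, (ψ n).Dom, fun H n => (ψ n).get (H n)⟩

/-- Application in Kleene's second model `K₂`: `g · h = Φ^{g⊕h}_{g 0}`,
defined iff this function is total. -/
def k2App (g h : ℕ → ℕ) : Part (ℕ → ℕ) :=
  partToTotal (phi (pjoin (toPFun g) (toPFun h)) (g 0))

/-- Application in van Oosten's sequential model `B`: `θ · ρ = Φ^{θ⊕ρ}_{θ 0}`
(always defined, as a partial function). -/
def bApp (θ ρ : ℕ →. ℕ) : Part (ℕ →. ℕ) :=
  Part.some (fun n => (θ 0).bind fun e => phi (pjoin θ ρ) e n)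

/-- Restriction of a partial applicative structure to a subset. -/
def subApp {α : Type*} (app : α → α → Part α) (P : α → Prop)
    (a b : Subtype P) : Part (Subtype P) :=
  (app a.1 b.1).bind fun c => Part.assert (P c) fun h => Part.some ⟨c, h⟩

/-- Carrier of `K₂^X` : the total `X`-computable functions. -/
def K2el (X : Set ℕ) : Type := {g : ℕ → ℕ // RecursiveIn (chi X) (toPFun g)}

/-- Application in `K₂^X`. -/
def k2XApp (X : Set ℕ) : K2el X → K2el X → Part (K2el X) :=
  subApp k2App _

/-- Carrier of `B^X` : the partial `X`-computable functions. -/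
def Bel (X : Set ℕ) : Type := {θ : ℕ →. ℕ // RecursiveIn (chi X) θ}

/-- Application in `B^X`. -/
def bXApp (X : Set ℕ) : Bel X → Bel X → Part (Bel X) :=
  subApp bApp _

/-- Application in Scott's graph model `G`. -/
def gApp (A B : Set ℕ) : Part (Set ℕ) :=
  Part.some {n | ∃ u, Nat.pair n u ∈ A ∧ Du u ⊆ B}

/-- Carrier of `G^Z` : the sets enumeration-reducible to `Z`. -/
def Gel (Z : Set ℕ) : Type := {A : Set ℕ // EnumLE A Z}

/-- Application in `G^Z`. -/
def gXApp (Z : Set ℕ) : Gel Z → Gel Z → Part (Gel Z) :=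
  subApp gApp _

/-- `X ⊕ X̄ = {2n : n ∈ X} ∪ {2n+1 : n ∉ X}`. -/
def joinCompl (X : Set ℕ) : Set ℕ :=
  {k | ∃ n, (k = 2 * n ∧ n ∈ X) ∨ (k = 2 * n + 1 ∧ n ∉ X)}

/-! ### The λ-calculus -/

/-- Untyped λ-terms (de Bruijn representation). -/
inductive Lam : Type
  | var : ℕ → Lam
  | app : Lam → Lam → Lam
  | abs : Lam → Lam

/-- Lift (shift up) the free variables `≥ d` of a term. -/
def Lam.lift : Lam → ℕ → Lam
  | .var n, d => if n < d then .var n else .var (n + 1)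
  | .app M N, d => .app (M.lift d) (N.lift d)
  | .abs M, d => .abs (M.lift (d + 1))

/-- Substitution `M[k := N]` (de Bruijn). -/
def Lam.subst : Lam → ℕ → Lam → Lam
  | .var n, k, N => if n = k then N else if k < n then .var (n - 1) else .var n
  | .app M M', k, N => .app (M.subst k N) (M'.subst k N)
  | .abs M, k, N => .abs (M.subst (k + 1) (N.lift 0))

/-- β-equivalence of λ-terms. -/
inductive BetaEq : Lam → Lam → Prop
  | beta (M N : Lam) : BetaEq (.app (.abs M) N) (M.subst 0 N)
  | refl (M : Lam) : BetaEq M M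
  | symm {M N : Lam} : BetaEq M N → BetaEq N M
  | trans {M N P : Lam} : BetaEq M N → BetaEq N P → BetaEq M P
  | appCongr {M M' N N' : Lam} :
      BetaEq M M' → BetaEq N N' → BetaEq (.app M N) (.app M' N')
  | absCongr {M M' : Lam} : BetaEq M M' → BetaEq (.abs M) (.abs M')

/-- βη-equivalence of λ-terms. -/
inductive BetaEtaEq : Lam → Lam → Prop
  | beta (M N : Lam) : BetaEtaEq (.app (.abs M) N) (M.subst 0 N)
  | eta (M : Lam) : BetaEtaEq (.abs (.app (M.lift 0) (.var 0))) M
  | refl (M : Lam) : BetaEtaEq M M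
  | symm {M N : Lam} : BetaEtaEq M N → BetaEtaEq N M
  | trans {M N P : Lam} : BetaEtaEq M N → BetaEtaEq N P → BetaEtaEq M P
  | appCongr {M M' N N' : Lam} :
      BetaEtaEq M M' → BetaEtaEq N N' → BetaEtaEq (.app M N) (.app M' N')
  | absCongr {M M' : Lam} : BetaEtaEq M M' → BetaEtaEq (.abs M) (.abs M')

def lamBetaSetoid : Setoid Lam := ⟨BetaEq, ⟨BetaEq.refl, BetaEq.symm, BetaEq.trans⟩⟩

def lamBetaEtaSetoid : Setoid Lam :=
  ⟨BetaEtaEq, ⟨BetaEtaEq.refl, BetaEtaEq.symm, BetaEtaEq.trans⟩⟩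

/-- The pca `λ` of λ-terms modulo β-equivalence. -/
def LamBeta : Type := Quotient lamBetaSetoid

/-- The pca `λη` of λ-terms modulo βη-equivalence. -/
def LamBetaEta : Type := Quotient lamBetaEtaSetoid

/-- Application in `λ` (total). -/
def lamBetaApp : LamBeta → LamBeta → Part LamBeta := fun a b =>
  Part.some (Quotient.map₂ Lam.app (fun _ _ h1 _ _ h2 => BetaEq.appCongr h1 h2) a b)

/-- Application in `λη` (total). -/
def lamBetaEtaApp : LamBetaEta → LamBetaEta → Part LamBetaEta := fun a b =>
  Part.some (Quotient.map₂ Lam.app (fun _ _ h1 _ _ h2 => BetaEtaEq.appCongr h1 h2) a b)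

/-!
An index of an element of `B^X` relative to `X` is a natural number, application of `B^X` is
computable on indices, and equality of the functions with two given indices is decidable relative
to `X''`. If `X'' ≤ Y`, every element of `B^X` therefore has a canonical index which `Y` can compute
from any other one, and `K₁^Y` simulates application on canonical indices.

Conversely, let `f` be an embedding of `B^X` into `K₁^Y`. The constant functions `n` are obtained
from the constant `0` by iterating an element `s`, and for each partial `X`-computable matrix `B`
some element `t` sends the constant `n` to the row `B (n, ·)`. Hence `Y` computes `f (B (n, ·))`
from `n`, and since `f` is injective, it decides which rows of `B` are constantly `0`. By the limit
lemma, the complement of `X''` is the set of these `n` for a suitable `B`: membership in `X''` means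
that some `X`-computable condition holds from some stage on, and row `n` searches for
counterexamples beyond every stage.
-/

open OmegaCompletePartialOrder OmegaCompletePartialOrder.ContinuousHom

section Continuity

variable {α : Type*} [OmegaCompletePartialOrder α]

theorem ωScottContinuous_part_iff {β : Type*} {f : α → Part β} :
    ωScottContinuous f ↔
      Monotone f ∧ ∀ (c : Chain α) (b : β), b ∈ f (ωSup c) → ∃ i, b ∈ f (c i) := by
  have mem_ωSup_map (hf : Monotone f) (c : Chain α) (b : β) :
      b ∈ ωSup (c.map ⟨f, hf⟩) ↔ ∃ i, b ∈ f (c i) := by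
    rw [Part.mem_ωSup]
    exact exists_congr fun i => by rw [eq_comm, ← Part.eq_some_iff]; rfl
  constructor
  · intro hf
    refine ⟨hf.monotone, fun c b hb => (mem_ωSup_map hf.monotone c b).1 ?_⟩
    rwa [hf.map_ωSup c] at hb
  · rintro ⟨hmono, hsup⟩
    refine .of_monotone_map_ωSup ⟨hmono, fun c => le_antisymm (fun b hb => ?_) ?_⟩
    · exact (mem_ωSup_map hmono c b).2 (hsup c b hb)
    · exact ωSup_le _ _ fun i => hmono (le_ωSup c i)

theorem ωScottContinuous_rfind {p : α → ℕ → Part Bool} (hp : ∀ n, ωScottContinuous (p · n)) :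
    ωScottContinuous fun a => Nat.rfind (p a) := by
  have hp' n := ωScottContinuous_part_iff.1 (hp n)
  refine ωScottContinuous_part_iff.2 ⟨fun a b hab m hm => ?_, fun c m hm => ?_⟩
  · obtain ⟨htrue, hfalse⟩ := Nat.mem_rfind.1 hm
    exact Nat.mem_rfind.2 ⟨(hp' m).1 hab _ htrue, fun hk => (hp' _).1 hab _ (hfalse hk)⟩
  · obtain ⟨htrue, hfalse⟩ := Nat.mem_rfind.1 hm
    obtain ⟨i, hi⟩ := (hp' m).2 c _ htrue
    choose! j hj using fun k (hk : k < m) => (hp' k).2 c _ (hfalse hk)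
    let s := max i ((Finset.range m).sup j)
    have hs : ∀ k < m, j k ≤ s := fun k hk =>
      (Finset.le_sup (Finset.mem_range.2 hk)).trans (le_max_right _ _)
    exact ⟨s, Nat.mem_rfind.2 ⟨(hp' m).1 (c.monotone (le_max_left _ _)) _ hi,
      fun {k} hk => (hp' k).1 (c.monotone (hs k hk)) _ (hj k hk)⟩⟩

theorem ωScottContinuous_evalo {O : α → ℕ → Part ℕ} (hO : ∀ n, ωScottContinuous (O · n))
    (c : OCode) (n : ℕ) : ωScottContinuous fun a => evalo (O a) c n := by
  induction c generalizing n with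
  | zero | succ | left | right => exact ωScottContinuous.const
  | oracle => exact hO n
  | pair cf cg ihf ihg => exact ωScottContinuous.seq (ωScottContinuous.map (ihf n)) (ihg n)
  | comp cf cg ihf ihg => exact ωScottContinuous.bind (ihg n) (.of_apply₂ ihf)
  | prec cf cg ihf ihg =>
    simp only [evalo, Nat.unpaired]
    induction n.unpair.2 with
    | zero => exact ihf _
    | succ y IH => exact ωScottContinuous.bind IH (.of_apply₂ fun i => ihg _)
  | rfind' cf ihf =>
    exact ωScottContinuous.map (ωScottContinuous_rfind fun k => ωScottContinuous.map (ihf _))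

theorem ωScottContinuous_pjoin {f g : α → ℕ → Part ℕ} (hf : ∀ n, ωScottContinuous (f · n))
    (hg : ∀ n, ωScottContinuous (g · n)) (n : ℕ) :
    ωScottContinuous fun a => pjoin (f a) (g a) n := by
  unfold pjoin
  split_ifs
  · exact hf _
  · exact hg _

end Continuity

section RelativeComputability

open Encodable Nat.Partrec

/-- The translation of oracle-free codes into oracle codes. -/
def OCode.ofCode : Code → OCode
  | .zero => .zero
  | .succ => .succ
  | .left => .left
  | .right => .right
  | .pair cf cg => .pair (ofCode cf) (ofCode cg)
  | .comp cf cg => .comp (ofCode cf) (ofCode cg)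
  | .prec cf cg => .prec (ofCode cf) (ofCode cg)
  | .rfind' cf => .rfind' (ofCode cf)

variable {O : ℕ →. ℕ}

theorem evalo_ofCode (O : ℕ →. ℕ) (c : Code) : evalo O (.ofCode c) = c.eval := by
  induction c with
  | zero | succ | left | right => rfl
  | pair cf cg ihf ihg | comp cf cg ihf ihg | prec cf cg ihf ihg =>
    simp only [OCode.ofCode, evalo, Code.eval, ihf, ihg]
    rfl
  | rfind' cf ihf =>
    simp only [OCode.ofCode, evalo, Code.eval, ihf]
    rfl

variable {α β σ : Type*} [Primcodable α] [Primcodable β] [Primcodable σ]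

/-- Partial functions between `Primcodable` types which are partial computable relative to the
oracle `O`: the relativization of `Partrec`. -/
def PartrecIn (O : ℕ →. ℕ) (f : α → Part σ) : Prop :=
  RecursiveIn O fun n => Part.bind (decode (α := α) n) fun a => (f a).map encode

/-- Total functions which are computable relative to the oracle `O`: the relativization of
`Computable`. -/
def ComputableRelTo (O : ℕ →. ℕ) (f : α → σ) : Prop := PartrecIn O fun a => Part.some (f a)

theorem partrecIn_iff_recursiveIn {ψ : ℕ →. ℕ} : PartrecIn O ψ ↔ RecursiveIn O ψ := by
  simp [PartrecIn, Part.map_id']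

theorem partrecIn_oracle : PartrecIn O O :=
  partrecIn_iff_recursiveIn.2 ⟨.oracle, rfl⟩

namespace RecursiveIn

variable {f g : ℕ →. ℕ}

theorem of_partrec (hf : Nat.Partrec f) : RecursiveIn O f := by
  obtain ⟨c, rfl⟩ := Code.exists_code.1 hf
  exact ⟨.ofCode c, evalo_ofCode O c⟩

theorem of_eq (hf : RecursiveIn O f) (h : ∀ n, f n = g n) : RecursiveIn O g :=
  (funext h : f = g) ▸ hf

theorem pair (hf : RecursiveIn O f) (hg : RecursiveIn O g) :
    RecursiveIn O fun n => Nat.pair <$> f n <*> g n := by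
  obtain ⟨⟨cf, rfl⟩, ⟨cg, rfl⟩⟩ := hf, hg
  exact ⟨.pair cf cg, rfl⟩

theorem comp (hf : RecursiveIn O f) (hg : RecursiveIn O g) :
    RecursiveIn O fun n => g n >>= f := by
  obtain ⟨⟨cf, rfl⟩, ⟨cg, rfl⟩⟩ := hf, hg
  exact ⟨.comp cf cg, rfl⟩

theorem prec (hf : RecursiveIn O f) (hg : RecursiveIn O g) :
    RecursiveIn O (Nat.unpaired fun a n => n.rec (f a) fun y IH => do
      let i ← IH
      g (Nat.pair a (Nat.pair y i))) := by
  obtain ⟨⟨cf, rfl⟩, ⟨cg, rfl⟩⟩ := hf, hg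
  exact ⟨.prec cf cg, rfl⟩

theorem rfind (hf : RecursiveIn O f) :
    RecursiveIn O fun a => Nat.rfind fun n => (fun m => m = 0) <$> f (Nat.pair a n) := by
  obtain ⟨cf, rfl⟩ := hf
  have hpair : RecursiveIn O fun a => Part.some (Nat.pair a 0) :=
    of_partrec (Partrec.nat_iff.1 (Primrec₂.natPair.comp .id (.const 0)).to_comp)
  exact (comp ⟨.rfind' cf, rfl⟩ hpair).of_eq fun a => by
    simp [evalo, Part.map_id']

end RecursiveIn

namespace PartrecIn

theorem of_partrec {f : α → Part σ} (hf : Partrec f) : PartrecIn O f :=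
  RecursiveIn.of_partrec hf

theorem of_eq {f g : α → Part σ} (hf : PartrecIn O f) (h : ∀ a, f a = g a) : PartrecIn O g :=
  (funext h : f = g) ▸ hf

theorem bind {f : α → Part β} {g : α → β → Part σ} (hf : PartrecIn O f)
    (hg : PartrecIn O fun p : α × β => g p.1 p.2) : PartrecIn O fun a => (f a).bind (g a) :=
  (RecursiveIn.comp hg ((RecursiveIn.of_partrec .some).pair hf)).of_eq fun n => by
    rcases e : decode (α := α) n <;>
      simp [Seq.seq, e, encodek, Part.bind_map, Part.map_bind]

theorem comp {f : β → Part σ} {g : α → β} (hf : PartrecIn O f) (hg : ComputableRelTo O g) :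
    PartrecIn O fun a => f (g a) :=
  (RecursiveIn.comp hf hg).of_eq fun n => by
    cases decode (α := α) n <;> simp [encodek]

theorem map {f : α → Part β} {g : α → β → σ} (hf : PartrecIn O f)
    (hg : ComputableRelTo O fun p : α × β => g p.1 p.2) : PartrecIn O fun a => (f a).map (g a) := by
  simpa only [Part.bind_some_eq_map] using
    hf.bind (g := fun a b => Part.some (g a b)) hg

end PartrecIn

namespace ComputableRelTo

theorem of_primrec {f : α → σ} (hf : Primrec f) : ComputableRelTo O f :=
  .of_partrec hf.to_comp

theorem comp {f : β → σ} {g : α → β} (hf : ComputableRelTo O f) (hg : ComputableRelTo O g) :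
    ComputableRelTo O fun a => f (g a) :=
  PartrecIn.comp (f := fun b => Part.some (f b)) hf hg

theorem pair {f : α → β} {g : α → σ} (hf : ComputableRelTo O f) (hg : ComputableRelTo O g) :
    ComputableRelTo O fun a => (f a, g a) :=
  (RecursiveIn.pair hf hg).of_eq fun n => by
    cases decode (α := α) n <;> simp [Seq.seq]

end ComputableRelTo

theorem PartrecIn.nat_rec {f : α → ℕ} {g : α → Part σ} {h : α → ℕ × σ → Part σ}
    (hf : ComputableRelTo O f) (hg : PartrecIn O g)
    (hh : PartrecIn O fun p : α × ℕ × σ => h p.1 p.2) :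
    PartrecIn O fun a => (f a).rec (g a) fun y IH => IH.bind fun i => h a (y, i) :=
  ((RecursiveIn.prec hg hh).comp ((RecursiveIn.of_partrec .some).pair hf)).of_eq fun n => by
    rcases e : decode (α := α) n with - | a
    · simp [Seq.seq]
    · simp only [Part.coe_some, Part.bind_some]
      induction f a <;> simp_all [Seq.seq, Part.map_bind]

theorem PartrecIn.rfindOpt {f : α → ℕ → Option σ}
    (hf : ComputableRelTo O fun p : α × ℕ => f p.1 p.2) :
    PartrecIn O fun a => Nat.rfindOpt (f a) := by
  have hcond : Primrec fun p : (α × ℕ) × Option σ => bif p.2.isSome then 0 else 1 :=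
    .cond (Primrec.option_isSome.comp .snd) (.const 0) (.const 1)
  have hcond_eq (o : Option σ) : decide ((bif o.isSome then 0 else 1) = 0) = o.isSome := by
    cases o <;> rfl
  have hrfind : PartrecIn O fun a => Nat.rfind fun n => Part.some (f a n).isSome :=
    (RecursiveIn.rfind <| PartrecIn.map (f := fun p : α × ℕ => Part.some (f p.1 p.2))
      (g := fun _ o => bif o.isSome then 0 else 1) hf (.of_primrec hcond)).of_eq fun n => by
      rcases e : decode (α := α) n with - | a
      · simpa [e] using Nat.rfind_zero_none (fun _ => Part.none) rfl
      · simp [e, Part.map_id', hcond_eq]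
  exact hrfind.bind ((PartrecIn.of_partrec (Computable.ofOption .id)).comp hf)

end RelativeComputability

namespace OCode

/-- The section of `OCode.ofNat` which writes `0` for the unused argument of `rfind'`. -/
def toNat : OCode → ℕ
  | .zero => 0
  | .succ => 1
  | .left => 2
  | .right => 3
  | .oracle => 4
  | .pair a b => 4 * Nat.pair a.toNat b.toNat + 5
  | .comp a b => 4 * Nat.pair a.toNat b.toNat + 1 + 5
  | .prec a b => 4 * Nat.pair a.toNat b.toNat + 2 + 5
  | .rfind' a => 4 * Nat.pair a.toNat 0 + 3 + 5

theorem ofNat_toNat (c : OCode) : ofNat c.toNat = c := by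
  have div_four (p r : ℕ) (hr : r < 4) : (4 * p + r) / 4 = p := by omega
  induction c with
  | zero | succ | left | right | oracle => simp [toNat, ofNat]
  | pair a b iha ihb | comp a b iha ihb | prec a b iha ihb =>
    simp [toNat, ofNat, div_four, iha, ihb]
  | rfind' a iha => simp [toNat, ofNat, div_four, iha]

theorem toNat_injective : Function.Injective toNat :=
  Function.LeftInverse.injective ofNat_toNat

theorem evalo_comp (O : ℕ →. ℕ) (cf cg : OCode) (n : ℕ) :
    evalo O (.comp cf cg) n = (evalo O cg n).bind (evalo O cf) := rfl

/-- A code of the constant function with value `p`. -/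
def const : ℕ → OCode
  | 0 => .zero
  | p + 1 => .comp .succ (const p)

theorem evalo_const (O : ℕ →. ℕ) (p n : ℕ) : evalo O (const p) n = Part.some p := by
  induction p with
  | zero => rfl
  | succ p ih =>
    rw [const, evalo_comp, ih]
    exact Part.bind_some _ _

/-- A code of `fun n => Φ_c (p, n)`, for the s-m-n theorem. -/
def curry (c : OCode) (p : ℕ) : OCode := .comp c (.pair (const p) (.pair .left .right))

theorem evalo_curry (O : ℕ →. ℕ) (c : OCode) (p n : ℕ) :
    evalo O (curry c p) n = evalo O c (Nat.pair p n) := by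
  have hpair : evalo O (.pair (const p) (.pair .left .right)) n = Part.some (Nat.pair p n) := by
    simp [evalo, evalo_const, Seq.seq]
  rw [curry, evalo_comp, hpair]
  exact Part.bind_some _ _

theorem curry_injective (c : OCode) : Function.Injective c.curry := by
  intro p q hpq
  have hconst : const p = const q := by simpa [curry] using hpq
  exact Part.some_inj.1 (by rw [← evalo_const (chi ∅) p 0, hconst, evalo_const])

theorem primrec₂_toNat_node (r : ℕ) : Primrec₂ fun m n : ℕ => 4 * Nat.pair m n + r + 5 :=
  (Primrec.nat_add.comp (Primrec.nat_add.comp (Primrec.nat_mul.comp (.const 4)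
    (Primrec₂.natPair.comp .fst .snd)) (.const r)) (.const 5)).to₂

theorem primrec_toNat_const : Primrec fun p => (const p).toNat := by
  have hstep : Primrec₂ fun _ i : ℕ => 4 * Nat.pair 1 i + 1 + 5 :=
    (primrec₂_toNat_node 1).comp (.const 1) .snd
  refine (Primrec.nat_rec₁ 0 hstep).of_eq fun p => ?_
  induction p with
  | zero => rfl
  | succ p ih => simp only [ih, const, toNat]

theorem primrec_toNat_curry (c : OCode) : Primrec fun p => (c.curry p).toNat :=
  (primrec₂_toNat_node 1).comp (.const c.toNat)
    ((primrec₂_toNat_node 0).comp primrec_toNat_const (.const (pair left right).toNat))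

end OCode

section Indices

open Encodable

variable {O : ℕ →. ℕ} {α σ : Type*} [Primcodable α] [Primcodable σ]

theorem phi_toNat (O : ℕ →. ℕ) (c : OCode) : phi O c.toNat = evalo O c := by
  rw [phi, OCode.ofNat_toNat]

theorem RecursiveIn.exists_index {ψ : ℕ →. ℕ} (hψ : RecursiveIn O ψ) : ∃ e, phi O e = ψ := by
  obtain ⟨c, rfl⟩ := hψ
  exact ⟨c.toNat, phi_toNat O c⟩

theorem PartrecIn.exists_index_family {f : α → ℕ → Part ℕ}
    (hf : PartrecIn O fun p : α × ℕ => f p.1 p.2) :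
    ∃ s : α → ℕ, Primrec s ∧ Function.Injective s ∧ ∀ a, phi O (s a) = f a := by
  obtain ⟨c, hc⟩ := hf
  refine ⟨fun a => (c.curry (encode a)).toNat, (OCode.primrec_toNat_curry c).comp .encode,
    OCode.toNat_injective.comp (c.curry_injective.comp encode_injective), fun a => ?_⟩
  funext n
  rw [phi_toNat, OCode.evalo_curry, hc]
  simp [Part.map_id']

theorem PartrecIn.exists_reduction_jump {X : Set ℕ} {ψ : α → Part σ} (hψ : PartrecIn (chi X) ψ) :
    ∃ q : α → ℕ, Primrec q ∧ ∀ a, q a ∈ jump X ↔ (ψ a).Dom := by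
  obtain ⟨q, hq, -, hphi⟩ := PartrecIn.exists_index_family (O := chi X)
    (f := fun a _ => (ψ a).map fun _ => 0)
    ((hψ.comp (.of_primrec .fst)).map (.of_primrec (.const 0)))
  exact ⟨q, hq, fun a => by simp [jump, hphi]⟩

end Indices

section CodedOracles

open Nat.Partrec

theorem exists_code_family_of_partrec {α : Type*} [Primcodable α] {f : α → ℕ →. ℕ}
    (hf : Partrec₂ f) : ∃ C : α → Code, Primrec C ∧ ∀ a, (C a).eval = f a := by
  obtain ⟨c, hc⟩ := Code.exists_code.1 hf
  refine ⟨fun a => c.curry (Encodable.encode a),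
    Code.primrec₂_curry.comp (.const c) .encode, fun a => ?_⟩
  funext n
  rw [Code.eval_curry, hc]
  simp [Part.map_id']

namespace OCode

/-- The oracle-free code obtained from an oracle code by answering the queries by the code `d`. -/
def instantiate (d : Code) : OCode → Code
  | .zero => .zero
  | .succ => .succ
  | .left => .left
  | .right => .right
  | .oracle => d
  | .pair a b => .pair (instantiate d a) (instantiate d b)
  | .comp a b => .comp (instantiate d a) (instantiate d b)
  | .prec a b => .prec (instantiate d a) (instantiate d b)
  | .rfind' a => .rfind' (instantiate d a)

theorem eval_instantiate (d : Code) (c : OCode) : (c.instantiate d).eval = evalo d.eval c := by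
  induction c with
  | zero | succ | left | right | oracle => rfl
  | pair a b iha ihb | comp a b iha ihb | prec a b iha ihb =>
    simp only [instantiate, evalo, Code.eval, iha, ihb]
    rfl
  | rfind' a iha =>
    simp only [instantiate, evalo, Code.eval, iha]
    rfl

theorem primrec₂_of_ofNat_rec {α β : Type*} [Primcodable α] [Primcodable β] [Inhabited β]
    (F base : α → ℕ → β) (node : ℕ → β × β → β) (hbase : Primrec₂ base) (hnode : Primrec₂ node)
    (hF_base : ∀ a n, n < 5 → F a n = base a n)
    (hF_node : ∀ a n, F a (n + 5) =
      node (n % 4) (F a (n / 4).unpair.1, F a (n / 4).unpair.2)) : Primrec₂ F := by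
  refine Primrec.nat_strong_rec F (g := fun a L => some
    (if L.length < 5 then base a L.length else
      node ((L.length - 5) % 4) (L.getD ((L.length - 5) / 4).unpair.1 default,
        L.getD ((L.length - 5) / 4).unpair.2 default))) ?_ fun a n => ?_
  · have hlen : Primrec fun p : α × List β => p.2.length := Primrec.list_length.comp .snd
    have hsub : Primrec fun p : α × List β => p.2.length - 5 := Primrec.nat_sub.comp hlen (.const 5)
    have hargs : Primrec fun p : α × List β => ((p.2.length - 5) / 4).unpair :=
      Primrec.unpair.comp (Primrec.nat_div.comp hsub (.const 4))
    exact Primrec.option_some.comp <| .ite (Primrec.nat_lt.comp hlen (.const 5))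
      (hbase.comp .fst hlen) <| hnode.comp (Primrec.nat_mod.comp hsub (.const 4)) <|
      .pair ((Primrec.list_getD default).comp .snd (Primrec.fst.comp hargs))
        ((Primrec.list_getD default).comp .snd (Primrec.snd.comp hargs))
  · rcases lt_or_ge n 5 with hn | hn
    · simp [hn, hF_base]
    · obtain ⟨m, rfl⟩ := Nat.exists_eq_add_of_le' hn
      have hdiv := Nat.div_le_self m 4
      have hleft : (m / 4).unpair.1 < m + 5 := by have := Nat.unpair_left_le (m / 4); omega
      have hright : (m / 4).unpair.2 < m + 5 := by have := Nat.unpair_right_le (m / 4); omega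
      simp [hF_node, List.getD, hleft, hright]

theorem primrec₂_instantiate :
    Primrec₂ fun (d : Code) (k : ℕ) => (ofNat k).instantiate d := by
  refine primrec₂_of_ofNat_rec _
    (fun d k => [Code.zero, .succ, .left, .right][k]?.getD d)
    (fun r p => if r = 0 then .pair p.1 p.2 else if r = 1 then .comp p.1 p.2
      else if r = 2 then .prec p.1 p.2 else .rfind' p.1) ?_ ?_ (fun d k hk => ?_) fun d k => ?_
  · exact Primrec.option_getD.comp (Primrec.list_getElem?.comp (.const _) .snd) .fst
  · have hr (i : ℕ) : PrimrecPred fun p : ℕ × Code × Code => p.1 = i :=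
      Primrec.eq.comp .fst (.const i)
    have hleft : Primrec fun p : ℕ × Code × Code => p.2.1 := Primrec.fst.comp .snd
    have hright : Primrec fun p : ℕ × Code × Code => p.2.2 := Primrec.snd.comp .snd
    exact .ite (hr 0) (Code.primrec₂_pair.comp hleft hright) <|
      .ite (hr 1) (Code.primrec₂_comp.comp hleft hright) <|
      .ite (hr 2) (Code.primrec₂_prec.comp hleft hright) (Code.primrec_rfind'.comp hleft)
  · interval_cases k <;> rw [ofNat] <;> rfl
  · have hk : k % 4 < 4 := Nat.mod_lt _ (by norm_num)
    rw [ofNat]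
    generalize k % 4 = r at hk ⊢
    interval_cases r <;> simp [instantiate]

end OCode

theorem partrec_phi {α : Type*} [Primcodable α] {O : α → ℕ → Part ℕ} {e n : α → ℕ}
    (hO : Partrec₂ O) (he : Computable e) (hn : Computable n) :
    Partrec fun a => phi (O a) (e a) (n a) := by
  obtain ⟨C, hC, hCO⟩ := exists_code_family_of_partrec hO
  refine (Code.eval_part.comp (OCode.primrec₂_instantiate.to_comp.comp hC.to_comp he) hn).of_eq
    fun a => ?_
  rw [OCode.eval_instantiate, hCO]
  rfl

end CodedOracles

section FiniteOracles

open Encodable Nat.Partrec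

/-- The finite partial function whose graph is listed by `l`, as an oracle which is undefined
beyond the end of the list. -/
def lookup (l : List ℕ) : ℕ → Part ℕ := fun n => l[n]?

/-- The initial segment of length `u` of the sequence `g`. -/
def seg {σ : Type*} (g : ℕ → σ) (u : ℕ) : List σ := (List.range u).map g

theorem mem_seg {σ : Type*} {g : ℕ → σ} {u : ℕ} {b : σ} : b ∈ seg g u ↔ ∃ n < u, g n = b := by
  simp [seg]

theorem mem_lookup_seg {g : ℕ → ℕ} {u n m : ℕ} : m ∈ lookup (seg g u) n ↔ n < u ∧ g n = m := by
  simp [lookup, seg, Option.map_eq_some_iff, List.getElem?_eq_some_iff, and_assoc]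

theorem mem_apply_toPFun_iff {β : Type*} {F : (ℕ → Part ℕ) → Part β} (hF : ωScottContinuous F)
    (g : ℕ → ℕ) (b : β) : b ∈ F (toPFun g) ↔ ∃ u, b ∈ F (lookup (seg g u)) := by
  obtain ⟨hmono, hsup⟩ := ωScottContinuous_part_iff.1 hF
  let c : Chain (ℕ → Part ℕ) := ⟨fun u => lookup (seg g u), fun u v huv n m hm =>
    mem_lookup_seg.2 ((mem_lookup_seg.1 hm).imp_left (·.trans_le huv))⟩
  have hc : ωSup c = toPFun g := le_antisymm
    (ωSup_le _ _ fun u n m hm => Part.mem_some_iff.2 (mem_lookup_seg.1 hm).2.symm)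
    fun n m hm => le_ωSup c (n + 1) n m
      (mem_lookup_seg.2 ⟨n.lt_succ_self, (Part.mem_some_iff.1 hm).symm⟩)
  exact ⟨fun hb => hsup c b (hc ▸ hb), fun ⟨u, hu⟩ => hmono (hc ▸ le_ωSup c u) b hu⟩

variable {α σ : Type*} [Primcodable α] [Primcodable σ]

theorem mem_rfindOpt_iff {σ : Type*} {f : ℕ → Option σ}
    (hf : ∀ {a b m n}, a ∈ f m → b ∈ f n → a = b) {b : σ} :
    b ∈ Nat.rfindOpt f ↔ ∃ n, b ∈ f n := by
  refine ⟨Nat.rfindOpt_spec, fun ⟨n, hn⟩ => ?_⟩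
  obtain ⟨a, ha⟩ := Part.dom_iff_mem.1 (Nat.rfindOpt_dom.2 ⟨n, b, hn⟩)
  obtain ⟨m, hm⟩ := Nat.rfindOpt_spec ha
  rwa [hf hn hm]

theorem exists_stages_of_partrec {f : α → Part σ} (hf : Partrec f) :
    ∃ H : α → ℕ → Option σ, Primrec₂ H ∧ ∀ a b, b ∈ f a ↔ ∃ k, b ∈ H a k := by
  obtain ⟨c, hc⟩ := Code.exists_code.1 hf
  have hevaln : Primrec fun p : α × ℕ => Code.evaln p.2 c (encode p.1) :=
    Code.primrec_evaln.comp (.pair (.pair .snd (.const c)) (Primrec.encode.comp .fst))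
  refine ⟨fun a k => (Code.evaln k c (encode a)).bind decode,
    Primrec.option_bind hevaln (Primrec.decode.comp .snd), fun a b => ?_⟩
  have hceval : c.eval (encode a) = (f a).map encode := by simp [hc]
  calc b ∈ f a ↔ encode b ∈ c.eval (encode a) := by simp [hceval]
    _ ↔ ∃ k, encode b ∈ Code.evaln k c (encode a) := Code.evaln_complete
    _ ↔ ∃ k, b ∈ (Code.evaln k c (encode a)).bind decode := exists_congr fun k => by
      refine ⟨fun h => Option.mem_bind_iff.2 ⟨_, h, encodek b⟩, fun h => ?_⟩
      obtain ⟨m, hm, hmb⟩ := Option.mem_bind_iff.1 h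
      obtain ⟨b', -, rfl⟩ := (Part.mem_map_iff _).1 (hceval ▸ Code.evaln_sound hm)
      rwa [Option.some_inj.1 ((encodek b').symm.trans hmb)] at hm

theorem ComputableRelTo.seg {O : ℕ →. ℕ} {g : α → ℕ → σ}
    (hg : ComputableRelTo O fun p : α × ℕ => g p.1 p.2) :
    ComputableRelTo O fun p : α × ℕ => seg (g p.1) p.2 := by
  let step (p : α × ℕ) (q : ℕ × List σ) : Part (List σ) := Part.some (q.2 ++ [g p.1 q.1])
  have happend : ComputableRelTo O fun q : List σ × σ => q.1 ++ [q.2] :=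
    .of_primrec (Primrec.list_append.comp .fst (Primrec.list_cons.comp .snd (.const [])))
  have hlist : ComputableRelTo O fun p : (α × ℕ) × ℕ × List σ => p.2.2 :=
    .of_primrec (Primrec.snd.comp .snd)
  have hvalue : ComputableRelTo O fun p : (α × ℕ) × ℕ × List σ => g p.1.1 p.2.1 :=
    hg.comp (.of_primrec (.pair (Primrec.fst.comp .fst) (Primrec.fst.comp .snd)))
  have hstep : PartrecIn O fun p : (α × ℕ) × ℕ × List σ => step p.1 p.2 :=
    (happend.comp (hlist.pair hvalue) :)
  have hnil : ComputableRelTo O fun _ : α × ℕ => ([] : List σ) := .of_primrec (.const [])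
  refine (PartrecIn.nat_rec (h := step) (.of_primrec .snd) hnil hstep).of_eq fun ⟨a, u⟩ => ?_
  induction u with
  | zero => rfl
  | succ u ih =>
    simp only at ih ⊢
    rw [ih]
    simp [step, PCAEmb.seg, List.range_succ]

theorem computableRelTo_seg (g : ℕ → ℕ) : ComputableRelTo (toPFun g) (seg g) := by
  have hg : ComputableRelTo (toPFun g) fun p : Unit × ℕ => g p.2 :=
    PartrecIn.comp (f := toPFun g) partrecIn_oracle (.of_primrec .snd)
  have hpair : ComputableRelTo (toPFun g) fun u : ℕ => ((), u) :=
    .of_primrec (.pair (.const ()) .id)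
  exact ((ComputableRelTo.seg (g := fun _ => g) hg).comp hpair :)

/-- Relative to `g`, one searches for an initial segment of `g` on which the functional, evaluated
without an oracle, already converges. -/
theorem partrecIn_of_ωScottContinuous {F : α → (ℕ → Part ℕ) → Part σ}
    (hcont : ∀ a, ωScottContinuous (F a)) (hpart : Partrec₂ fun l a => F a (lookup l))
    (g : ℕ → ℕ) : PartrecIn (toPFun g) fun a => F a (toPFun g) := by
  obtain ⟨H, hH, hFH⟩ := exists_stages_of_partrec hpart
  have hmem (a : α) (b : σ) : b ∈ F a (toPFun g) ↔
      ∃ w : ℕ, b ∈ H (seg g w.unpair.1, a) w.unpair.2 := by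
    simp only [mem_apply_toPFun_iff (hcont a), hFH (_, a)]
    exact ⟨fun ⟨u, k, h⟩ => ⟨Nat.pair u k, by simpa using h⟩, fun ⟨w, h⟩ => ⟨_, _, h⟩⟩
  refine (PartrecIn.rfindOpt (f := fun a w => H (seg g w.unpair.1, a) w.unpair.2) ?_).of_eq
    fun a => ?_
  · have hleft : Primrec fun p : α × ℕ => p.2.unpair.1 :=
      Primrec.fst.comp (Primrec.unpair.comp .snd)
    have hright : Primrec fun p : α × ℕ => p.2.unpair.2 :=
      Primrec.snd.comp (Primrec.unpair.comp .snd)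
    have hargs : ComputableRelTo (toPFun g) fun p : α × ℕ =>
        ((seg g p.2.unpair.1, p.1), p.2.unpair.2) :=
      (((computableRelTo_seg g).comp (.of_primrec hleft)).pair (.of_primrec .fst)).pair
        (.of_primrec hright)
    have hH' : ComputableRelTo (toPFun g) fun q : (List ℕ × α) × ℕ => H q.1 q.2 := .of_primrec hH
    exact (hH'.comp hargs :)
  · ext b
    rw [hmem, mem_rfindOpt_iff fun hb hb' =>
      Part.mem_unique ((hmem a _).2 ⟨_, hb⟩) ((hmem a _).2 ⟨_, hb'⟩)]

end FiniteOracles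

section UniversalFunctions

theorem partrec₂_lookup : Partrec₂ lookup :=
  (Primrec.list_getElem?.comp .fst .snd).to_comp.ofOption

theorem partrec₂_pjoin {α : Type*} [Primcodable α] {f g : α → ℕ → Part ℕ} (hf : Partrec₂ f)
    (hg : Partrec₂ g) : Partrec₂ fun a => pjoin (f a) (g a) := by
  have heven : Primrec fun p : α × ℕ => decide (p.2 % 2 = 0) :=
    (Primrec.eq.comp (Primrec.nat_mod.comp .snd (.const 2)) (.const 0)).decide
  have hhalf : Primrec fun p : α × ℕ => (p.1, p.2 / 2) :=
    .pair .fst (Primrec.nat_div.comp .snd (.const 2))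
  exact (Partrec.cond heven.to_comp (Partrec.comp hf hhalf.to_comp)
    (Partrec.comp hg hhalf.to_comp)).of_eq fun p => by simp [pjoin, Bool.cond_decide]

theorem ωScottContinuous_phi (e n : ℕ) : ωScottContinuous fun O : ℕ → Part ℕ => phi O e n :=
  ωScottContinuous_evalo (fun n => ωScottContinuous.id.apply₂ n) _ _

theorem partrecIn_phi (X : Set ℕ) :
    PartrecIn (chi X) fun p : ℕ × ℕ => phi (chi X) p.1 p.2 :=
  partrecIn_of_ωScottContinuous (F := fun (p : ℕ × ℕ) O => phi O p.1 p.2)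
    (fun _ => ωScottContinuous_phi _ _)
    (partrec_phi (partrec₂_lookup.comp (Computable.fst.comp .fst) .snd)
      (Computable.fst.comp .snd) (Computable.snd.comp .snd)) _

/-- The function `θ · ρ` computed by the application of van Oosten's model `B`; in contrast to
`bApp` it is not wrapped into a (total) partial element. -/
def seqApp (θ ρ : ℕ → Part ℕ) : ℕ → Part ℕ := fun n => (θ 0).bind fun e => phi (pjoin θ ρ) e n

theorem partrecIn_seqApp_phi (X : Set ℕ) : PartrecIn (chi X) fun p : (ℕ × ℕ) × ℕ =>
    seqApp (phi (chi X) p.1.1) (phi (chi X) p.1.2) p.2 := by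
  refine partrecIn_of_ωScottContinuous
    (F := fun (p : (ℕ × ℕ) × ℕ) O => seqApp (phi O p.1.1) (phi O p.1.2) p.2) (fun p => ?_) ?_ _
  · exact ωScottContinuous.bind (ωScottContinuous_phi _ _) (.of_apply₂ fun k =>
      ωScottContinuous_evalo
        (ωScottContinuous_pjoin (ωScottContinuous_phi _) (ωScottContinuous_phi _)) _ _)
  · have hphi {e : List ℕ × (ℕ × ℕ) × ℕ → ℕ} (he : Computable e) :
        Partrec₂ fun (q : List ℕ × (ℕ × ℕ) × ℕ) (n : ℕ) => phi (lookup q.1) (e q) n :=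
      partrec_phi (O := fun p : (List ℕ × (ℕ × ℕ) × ℕ) × ℕ => lookup p.1.1)
        (partrec₂_lookup.comp (Computable.fst.comp (Computable.fst.comp .fst)) .snd)
        (he.comp .fst) .snd
    have hleft : Computable fun q : List ℕ × (ℕ × ℕ) × ℕ => q.2.1.1 :=
      Computable.fst.comp (Computable.fst.comp .snd)
    have hright : Computable fun q : List ℕ × (ℕ × ℕ) × ℕ => q.2.1.2 :=
      Computable.snd.comp (Computable.fst.comp .snd)
    have hjoin := partrec₂_pjoin (hphi hleft) (hphi hright)
    exact Partrec.bind ((hphi hleft).comp .id (.const 0)) <|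
      partrec_phi (hjoin.comp (Computable.fst.comp .fst) .snd) .snd
        (Computable.snd.comp (Computable.snd.comp .fst))

end UniversalFunctions

section Numbering

variable {X : Set ℕ}

theorem mem_bXApp_iff {θ ρ τ : Bel X} : τ ∈ bXApp X θ ρ ↔ seqApp θ.1 ρ.1 = τ.1 := by
  refine Part.mem_bind_iff.trans ⟨?_, fun h => ⟨_, Part.mem_some _, ?_⟩⟩
  · rintro ⟨c, hc, hτ⟩
    obtain ⟨_, hτ⟩ := Part.mem_assert_iff.1 hτ
    rw [Part.mem_some_iff.1 hτ]
    exact (Part.mem_some_iff.1 hc).symm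
  · have hrec : RecursiveIn (chi X) (seqApp θ.1 ρ.1) := h ▸ τ.2
    exact Part.mem_assert_iff.2 ⟨hrec, Part.mem_some_iff.2 (Subtype.ext h.symm)⟩

/-- The standard numbering of the carrier of `B^X` by indices relative to `X`. -/
noncomputable def Bel.ofIndex (X : Set ℕ) (e : ℕ) : Bel X := ⟨phi (chi X) e, _, rfl⟩

theorem Bel.ofIndex_surjective (X : Set ℕ) : Function.Surjective (Bel.ofIndex X) := fun θ =>
  θ.2.exists_index.imp fun _ he => Subtype.ext he

theorem exists_apply_ofIndex (X : Set ℕ) : ∃ a : ℕ × ℕ → ℕ, Primrec a ∧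
    ∀ e e', Bel.ofIndex X (a (e, e')) ∈ bXApp X (Bel.ofIndex X e) (Bel.ofIndex X e') := by
  obtain ⟨a, ha, -, hphi⟩ := (partrecIn_seqApp_phi X).exists_index_family
    (f := fun p : ℕ × ℕ => seqApp (phi (chi X) p.1) (phi (chi X) p.2))
  exact ⟨a, ha, fun e e' => mem_bXApp_iff.2 (hphi (e, e')).symm⟩

end Numbering

section Decidability

variable {X Y : Set ℕ}

theorem TuringLE.refl (X : Set ℕ) : TuringLE X X := ⟨.oracle, rfl⟩

open Classical in
theorem TuringLE.computableRelTo_mem (h : TuringLE X Y) :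
    ComputableRelTo (chi Y) fun n => decide (n ∈ X) := by
  have hindicator : ComputableRelTo (chi Y) (X.indicator fun _ => 1) :=
    partrecIn_iff_recursiveIn.2 h
  have hone : Primrec fun m : ℕ => decide (m = 1) := (Primrec.eq.comp .id (.const 1)).decide
  refine ((ComputableRelTo.of_primrec hone).comp hindicator).of_eq fun n => ?_
  by_cases hn : n ∈ X <;> simp [hn]

open Classical in
theorem turingLE_of_computableRelTo_mem (h : ComputableRelTo (chi Y) fun n => decide (n ∈ X)) :
    TuringLE X Y := by
  have htoNat : Primrec fun b : Bool => b.toNat := Primrec.dom_finite _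
  refine partrecIn_iff_recursiveIn.1
    (((ComputableRelTo.of_primrec htoNat).comp h).of_eq fun n => ?_)
  by_cases hn : n ∈ X <;> simp [hn, chi]

theorem exists_reduction_graph_jump (X : Set ℕ) : ∃ q : ℕ × ℕ × ℕ → ℕ, Primrec q ∧
    ∀ e n m, q (e, n, m) ∈ jump X ↔ m ∈ phi (chi X) e n := by
  have hgraph : PartrecIn (chi X) fun p : ℕ × ℕ × ℕ => (phi (chi X) p.1 p.2.1).bind fun k =>
      Part.ofOption (if k = p.2.2 then some 0 else none) := by
    have htest : Primrec fun q : (ℕ × ℕ × ℕ) × ℕ => if q.2 = q.1.2.2 then some 0 else none :=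
      .ite (Primrec.eq.comp .snd (Primrec.snd.comp (Primrec.snd.comp .fst))) (.const _) (.const _)
    exact ((partrecIn_phi X).comp (.of_primrec (.pair .fst (Primrec.fst.comp .snd)))).bind
      (.of_partrec (Computable.ofOption htest.to_comp))
  obtain ⟨q, hq, hdom⟩ := hgraph.exists_reduction_jump
  refine ⟨q, hq, fun e n m => (hdom _).trans ?_⟩
  simp [Part.dom_iff_mem]

theorem exists_reduction_phi_ne_jump_jump (X : Set ℕ) : ∃ r : ℕ × ℕ → ℕ, Primrec r ∧
    ∀ e e', r (e, e') ∈ jump (jump X) ↔ phi (chi X) e ≠ phi (chi X) e' := by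
  classical
  obtain ⟨q, hq, hgraph⟩ := exists_reduction_graph_jump X
  have hne (e e' : ℕ) : phi (chi X) e ≠ phi (chi X) e' ↔
      ∃ w : ℕ, decide (q (e, w.unpair) ∈ jump X) ≠ decide (q (e', w.unpair) ∈ jump X) := by
    contrapose!
    refine ⟨fun h w => ?_, fun h => funext fun n => Part.ext fun m => ?_⟩
    · rw [decide_eq_decide, hgraph, hgraph, h]
    · simpa [hgraph] using h (Nat.pair n m)
  have hq_mem {c : (ℕ × ℕ) × ℕ → ℕ} (hc : Primrec c) : ComputableRelTo (chi (jump X))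
      fun p : (ℕ × ℕ) × ℕ => decide (q (c p, p.2.unpair) ∈ jump X) :=
    (TuringLE.refl _).computableRelTo_mem.comp
      (.of_primrec (hq.comp (hc.pair (Primrec.unpair.comp .snd))))
  have htest : Primrec fun b : Bool × Bool => if b.1 ≠ b.2 then some 0 else none :=
    Primrec.dom_finite _
  obtain ⟨r, hr, hdom⟩ := (PartrecIn.rfindOpt (f := fun (p : ℕ × ℕ) w =>
      if decide (q (p.1, w.unpair) ∈ jump X) ≠ decide (q (p.2, w.unpair) ∈ jump X)
      then some 0 else none)
    ((ComputableRelTo.of_primrec htest).comp ((hq_mem (Primrec.fst.comp .fst)).pair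
      (hq_mem (Primrec.snd.comp .fst))))).exists_reduction_jump
  refine ⟨r, hr, fun e e' => (hdom _).trans (Nat.rfindOpt_dom.trans ?_)⟩
  rw [hne]
  simp

open Classical in
theorem computableRelTo_ofIndex_eq (h : TuringLE (jump (jump X)) Y) :
    ComputableRelTo (chi Y) fun p : ℕ × ℕ => decide (Bel.ofIndex X p.1 = Bel.ofIndex X p.2) := by
  obtain ⟨r, hr, hne⟩ := exists_reduction_phi_ne_jump_jump X
  refine ((ComputableRelTo.of_primrec Primrec.not).comp
    (h.computableRelTo_mem.comp (.of_primrec hr))).of_eq fun p => ?_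
  have heq : Bel.ofIndex X p.1 = Bel.ofIndex X p.2 ↔ r p ∉ jump (jump X) := by
    rw [hne, not_not]
    exact Subtype.ext_iff
  simp [heq]

end Decidability

section EmbeddingsIntoK1

variable {α : Type*} {Y : Set ℕ}

theorem exists_partrec_leftInverse [Primcodable α] {s : α → ℕ} (hs : Primrec s)
    (hinj : Function.Injective s) : ∃ v : ℕ → Part α, Partrec v ∧ ∀ a, v (s a) = Part.some a := by
  let test (y k : ℕ) : Option α :=
    (Encodable.decode k).bind fun a => if s a = y then some a else none
  have htest : Primrec₂ test := Primrec.option_bind (Primrec.decode.comp .snd)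
    (.ite (Primrec.eq.comp (hs.comp .snd) (Primrec.fst.comp .fst))
      (Primrec.option_some.comp .snd) (.const none))
  have mem_test {a b : α} {k : ℕ} (hb : b ∈ test (s a) k) : b = a := by
    obtain ⟨a', -, ha'⟩ := Option.mem_bind_iff.1 hb
    obtain ⟨heq, hb⟩ := Option.mem_ite_none_right.1 ha'
    exact (Option.mem_some_iff.1 hb).symm.trans (hinj heq)
  refine ⟨fun y => Nat.rfindOpt (test y), Partrec.rfindOpt htest.to_comp, fun a => ?_⟩
  rw [Part.eq_some_iff, mem_rfindOpt_iff fun hb hc => (mem_test hb).trans (mem_test hc).symm]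
  exact ⟨Encodable.encode a, by simp [test]⟩

/-- The index `c n`, applied to `c m`, recovers `m` by a search and then runs `ψ` on `(n, m)`. -/
theorem exists_injective_mem_k1App {ψ : ℕ × ℕ → Part ℕ} (hψ : PartrecIn (chi Y) ψ) :
    ∃ c : ℕ → ℕ, Function.Injective c ∧
      ∀ n m j, j ∈ ψ (n, m) → c j ∈ k1App Y (c n) (c m) := by
  obtain ⟨s, hs, hinj, hphi⟩ := PartrecIn.exists_index_family (O := chi Y)
    (f := fun p : ℕ × ℕ => fun y => phi (chi Y) p.1 (Nat.pair p.2 y))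
    ((partrecIn_phi Y).comp (.of_primrec (.pair (Primrec.fst.comp .fst)
      (Primrec₂.natPair.comp (Primrec.snd.comp .fst) .snd))))
  obtain ⟨v, hv, hvs⟩ := exists_partrec_leftInverse hs hinj
  have hdecode : PartrecIn (chi Y) fun x : ℕ => v x.unpair.2 :=
    (PartrecIn.of_partrec hv).comp (.of_primrec (Primrec.snd.comp .unpair))
  have hop : PartrecIn (chi Y) fun x : ℕ =>
      (v x.unpair.2).bind fun w => (ψ (x.unpair.1, w.2)).map fun j => s (w.1, j) :=
    hdecode.bind <| .map
      (hψ.comp (.of_primrec (.pair (Primrec.fst.comp (Primrec.unpair.comp .fst))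
        (Primrec.snd.comp .snd))))
      (.of_primrec (hs.comp (.pair (Primrec.fst.comp (Primrec.snd.comp .fst)) .snd)))
  obtain ⟨C, hC⟩ := (partrecIn_iff_recursiveIn.1 hop).exists_index
  refine ⟨fun n => s (C, n), fun n m h => (Prod.ext_iff.1 (hinj h)).2, fun n m j hj => ?_⟩
  simp only [k1App, hphi, hC, Nat.unpair_pair, hvs, Part.bind_some]
  exact Part.mem_map _ hj

open Classical in
theorem exists_computable_section {γ : ℕ → α} (hγ : Function.Surjective γ)
    (heq : ComputableRelTo (chi Y) fun p : ℕ × ℕ => decide (γ p.1 = γ p.2)) :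
    ∃ σ : α → ℕ, Function.RightInverse σ γ ∧ ComputableRelTo (chi Y) fun n => σ (γ n) := by
  let test (a : α) (k : ℕ) : Option ℕ := if γ k = a then some k else none
  have hdom (a : α) : (Nat.rfindOpt (test a)).Dom := by
    obtain ⟨k, rfl⟩ := hγ a
    exact Nat.rfindOpt_dom.2 ⟨k, k, by simp [test]⟩
  refine ⟨fun a => (Nat.rfindOpt (test a)).get (hdom a), fun a => ?_, ?_⟩
  · obtain ⟨k, hk⟩ := Nat.rfindOpt_spec (Part.get_mem (hdom a))
    obtain ⟨hka, hk⟩ := Option.mem_ite_none_right.1 hk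
    exact (congrArg γ (Option.mem_some_iff.1 hk)).symm.trans hka
  · have hite : Primrec fun q : Bool × ℕ => if q.1 then some q.2 else none :=
      .ite (Primrec.eq.comp .fst (.const true)) (Primrec.option_some.comp .snd) (.const none)
    have htest : ComputableRelTo (chi Y) fun p : ℕ × ℕ => test (γ p.1) p.2 :=
      ((ComputableRelTo.of_primrec hite).comp ((heq.comp (.of_primrec (.pair .snd .fst))).pair
        (.of_primrec .snd))).of_eq fun p => by simp [test]
    exact (PartrecIn.rfindOpt htest).of_eq fun n => (Part.some_get _).symm

open Classical in
theorem exists_embedding_k1App {app : α → α → Part α} {γ : ℕ → α} (hγ : Function.Surjective γ)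
    (heq : ComputableRelTo (chi Y) fun p : ℕ × ℕ => decide (γ p.1 = γ p.2))
    (happ : EffValued Y app fun n => Part.some (γ n)) :
    ∃ f : α → ℕ, IsPCAEmbedding app (k1App Y) f := by
  obtain ⟨σ, hσγ, hσ⟩ := exists_computable_section hγ heq
  obtain ⟨ψ, hψ, hψapp⟩ := happ
  have hψσ : PartrecIn (chi Y) fun p : ℕ × ℕ => (ψ (Nat.pair p.1 p.2)).map fun j => σ (γ j) :=
    .map ((partrecIn_iff_recursiveIn.2 hψ).comp (.of_primrec Primrec₂.natPair))
      (hσ.comp (.of_primrec .snd))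
  obtain ⟨c, hc, hcapp⟩ := exists_injective_mem_k1App hψσ
  refine ⟨fun a => c (σ a), hc.comp hσγ.injective, fun a a' b hb => hcapp _ _ _ ?_⟩
  obtain ⟨j, hj, hjb⟩ := hψapp (σ a) (σ a') a a' b (Part.mem_some_iff.2 (hσγ a).symm)
    (Part.mem_some_iff.2 (hσγ a').symm) hb
  exact (Part.mem_map_iff _).2 ⟨j, hj, by rw [← Part.mem_some_iff.1 hjb]⟩

theorem exists_embedding_of_turingLE {X : Set ℕ} (h : TuringLE (jump (jump X)) Y) :
    ∃ f : Bel X → ℕ, IsPCAEmbedding (bXApp X) (k1App Y) f := by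
  obtain ⟨a, ha, happ⟩ := exists_apply_ofIndex X
  refine exists_embedding_k1App (Bel.ofIndex_surjective X) (computableRelTo_ofIndex_eq h)
    ⟨fun x => Part.some (a x.unpair),
      partrecIn_iff_recursiveIn.1 (.of_partrec (ha.comp .unpair).to_comp),
      fun n m θ ρ τ hθ hρ hτ => ⟨_, Part.mem_some _, ?_⟩⟩
  obtain rfl := Part.mem_some_iff.1 hθ
  obtain rfl := Part.mem_some_iff.1 hρ
  rw [Nat.unpair_pair]
  exact Part.mem_some_iff.2 (Part.mem_unique hτ (happ n m))

end EmbeddingsIntoK1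

section RowsOfComputableMatrices

open Nat.Partrec

variable {X Y : Set ℕ}

open Classical in
theorem computableRelTo_row_eq_of_embedding {α : Type*} {app : α → α → Part α} {f : α → ℕ}
    (hf : IsPCAEmbedding app (k1App Y) f) {num row : ℕ → α} {s t : α}
    (hs : ∀ n, num (n + 1) ∈ app s (num n)) (ht : ∀ n, row n ∈ app t (num n)) (a : α) :
    ComputableRelTo (chi Y) fun n => decide (row n = a) := by
  obtain ⟨hinj, happ⟩ := hf
  have hphi {e : ℕ} : PartrecIn (chi Y) fun p : ℕ => phi (chi Y) e p :=
    (partrecIn_phi Y).comp (.of_primrec (.pair (.const e) .id))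
  have hnum : ComputableRelTo (chi Y) fun n => f (num n) := by
    refine (PartrecIn.nat_rec (h := fun _ p => phi (chi Y) (f s) p.2) (.of_primrec .id)
      (ComputableRelTo.of_primrec (.const (f (num 0))))
      (hphi.comp (.of_primrec (Primrec.snd.comp .snd)))).of_eq fun n => ?_
    simp only [id_eq]
    induction n with
    | zero => rfl
    | succ n ih =>
      simp only [ih, Part.bind_some]
      exact Part.eq_some_iff.2 (happ _ _ _ (hs n))
  have hrow : ComputableRelTo (chi Y) fun n => f (row n) :=
    (hphi.comp hnum).of_eq fun n => Part.eq_some_iff.2 (happ _ _ _ (ht n))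
  have heq : Primrec fun m : ℕ => decide (m = f a) := (Primrec.eq.comp .id (.const _)).decide
  exact ((ComputableRelTo.of_primrec heq).comp hrow).of_eq fun n => by simp [hinj.eq_iff]

theorem pjoin_two_mul (θ ρ : ℕ → Part ℕ) (n : ℕ) : pjoin θ ρ (2 * n) = θ n := by
  simp [pjoin]

theorem exists_recursiveIn_zero_succ (e : ℕ) {ψ : ℕ → Part ℕ} (hψ : PartrecIn (chi X) ψ) :
    ∃ θ : ℕ → Part ℕ, RecursiveIn (chi X) θ ∧ θ 0 = Part.some e ∧ ∀ n, θ (n + 1) = ψ n := by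
  obtain ⟨i, hi⟩ := (partrecIn_iff_recursiveIn.1 hψ).exists_index
  have hindex : Primrec fun n : ℕ => (if n = 0 then (OCode.const e).toNat else i, n - 1) :=
    .pair (.ite (Primrec.eq.comp .id (.const 0)) (.const _) (.const _)) Primrec.pred
  refine ⟨_, partrecIn_iff_recursiveIn.1 ((partrecIn_phi X).comp (.of_primrec hindex)), ?_, ?_⟩
  · simp [phi_toNat, OCode.evalo_const]
  · simp [hi]

theorem exists_code_row : ∃ c : OCode, ∀ (O : ℕ →. ℕ) (x : ℕ),
    evalo O c x = (O 1).bind fun n => O (2 * (Nat.pair n x + 1)) := by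
  have hdouble : Primrec fun m : ℕ => 2 * (m + 1) :=
    Primrec.nat_mul.comp (.const 2) Primrec.succ
  obtain ⟨d, hd⟩ := Code.exists_code.1 (Partrec.nat_iff.1 hdouble.to_comp)
  refine ⟨.comp .oracle (.comp (.ofCode d)
    (.pair (.comp .oracle (.const 1)) (.pair .left .right))), fun O x => ?_⟩
  have hone : evalo O (.comp .oracle (.const 1)) x = O 1 := by
    rw [OCode.evalo_comp, OCode.evalo_const]
    exact Part.bind_some _ _
  have hid : evalo O (.pair .left .right) x = Part.some x := by simp [evalo, Seq.seq]
  calc _ = (((Nat.pair <$> O 1 <*> Part.some x).bind fun m => d.eval m).bind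
        fun m => O m : Part ℕ) := by
        rw [OCode.evalo_comp, OCode.evalo_comp, evalo_ofCode, ← hone, ← hid]
        rfl
    _ = _ := by
      rcases (O 1).eq_none_or_eq_some with h | ⟨n, h⟩ <;> simp [h, hd, Seq.seq]

theorem exists_seqApp_eq_row {ψ : ℕ × ℕ → Part ℕ} (hψ : PartrecIn (chi X) ψ) :
    ∃ θ : ℕ → Part ℕ, RecursiveIn (chi X) θ ∧
      ∀ (n : ℕ) (ρ : ℕ → Part ℕ), ρ 0 = Part.some n → seqApp θ ρ = fun x => ψ (n, x) := by
  obtain ⟨c, hc⟩ := exists_code_row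
  obtain ⟨θ, hθ, hθ_zero, hθ_succ⟩ :=
    exists_recursiveIn_zero_succ c.toNat (hψ.comp (.of_primrec .unpair))
  refine ⟨θ, hθ, fun n ρ hρ => funext fun x => ?_⟩
  have hone : pjoin θ ρ 1 = Part.some n := hρ
  calc seqApp θ ρ x = pjoin θ ρ (2 * (Nat.pair n x + 1)) := by
        simp only [seqApp, hθ_zero, Part.bind_some, phi_toNat, hc, hone]
    _ = ψ (n, x) := by rw [pjoin_two_mul, hθ_succ, Nat.unpair_pair]

/-- The constant function with value `n`, as an element of `B^X`. -/
def Bel.const (X : Set ℕ) (n : ℕ) : Bel X :=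
  ⟨fun _ => Part.some n, .const n, funext (OCode.evalo_const _ n)⟩

theorem turingLE_of_embedding {f : Bel X → ℕ} (hf : IsPCAEmbedding (bXApp X) (k1App Y) f)
    {Z : Set ℕ} {B : ℕ × ℕ → Part ℕ} (hB : PartrecIn (chi X) B)
    (hZ : ∀ n, n ∉ Z ↔ ∀ x, B (n, x) = Part.some 0) : TuringLE Z Y := by
  classical
  obtain ⟨s, hs, hs_row⟩ := exists_seqApp_eq_row (X := X) (ψ := fun p => Part.some (p.1 + 1))
    (.of_partrec (Primrec.succ.comp .fst).to_comp)
  obtain ⟨t, ht, ht_row⟩ := exists_seqApp_eq_row hB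
  let row (n : ℕ) : Bel X := ⟨fun x => B (n, x),
    partrecIn_iff_recursiveIn.1 (hB.comp (.of_primrec (.pair (.const n) .id)))⟩
  have hrow := computableRelTo_row_eq_of_embedding hf (row := row) (s := ⟨s, hs⟩) (t := ⟨t, ht⟩)
    (fun n => mem_bXApp_iff.2 (hs_row n (Bel.const X n).1 rfl))
    (fun n => mem_bXApp_iff.2 (ht_row n (Bel.const X n).1 rfl)) (Bel.const X 0)
  have hmem (n : ℕ) : row n = Bel.const X 0 ↔ n ∉ Z :=
    Subtype.ext_iff.trans (funext_iff.trans (hZ n).symm)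
  refine turingLE_of_computableRelTo_mem
    (((ComputableRelTo.of_primrec Primrec.not).comp hrow).of_eq fun n => ?_)
  simp [hmem]

end RowsOfComputableMatrices

section DoubleJump

open Filter

theorem exists_stages_jump : ∃ h : List ℕ × ℕ × ℕ → Bool, Primrec h ∧
    ∀ (W : Set ℕ) (e : ℕ),
      e ∈ jump W ↔ ∃ u k, h (seg (W.indicator fun _ => 1) u, k, e) = true := by
  obtain ⟨H, hH, hphi⟩ := exists_stages_of_partrec (f := fun p : List ℕ × ℕ =>
    phi (lookup p.1) p.2 p.2)
    (partrec_phi (partrec₂_lookup.comp (Computable.fst.comp .fst) .snd) .snd .snd)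
  refine ⟨fun p => (H (p.1, p.2.2) p.2.1).isSome, Primrec.option_isSome.comp
    (hH.comp (.pair .fst (Primrec.snd.comp .snd)) (Primrec.fst.comp .snd)), fun W e => ?_⟩
  calc e ∈ jump W ↔ ∃ m, m ∈ phi (toPFun (W.indicator fun _ => 1)) e e := Part.dom_iff_mem
    _ ↔ ∃ m u k, m ∈ H (seg (W.indicator fun _ => 1) u, e) k := by
      simp only [mem_apply_toPFun_iff (ωScottContinuous_phi e e), ← hphi]
    _ ↔ _ := by
      simp only [Option.isSome_iff_exists, Option.mem_def]
      exact ⟨fun ⟨m, u, k, h⟩ => ⟨u, k, m, h⟩, fun ⟨u, k, m, h⟩ => ⟨m, u, k, h⟩⟩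

theorem exists_eventually_eq_indicator_jump (X : Set ℕ) : ∃ A : ℕ → ℕ → ℕ,
    ComputableRelTo (chi X) (fun p : ℕ × ℕ => A p.1 p.2) ∧
      ∀ e, ∀ᶠ t in atTop, A t e = (jump X).indicator (fun _ => 1) e := by
  obtain ⟨h, hh, hjump⟩ := exists_stages_jump
  let halts (e w : ℕ) : Bool := h (seg (X.indicator fun _ => 1) w.unpair.1, w.unpair.2, e)
  have hunpair : Primrec fun p : ℕ × ℕ => p.2.unpair := Primrec.unpair.comp .snd
  have hhalts : ComputableRelTo (chi X) fun p : ℕ × ℕ => halts p.1 p.2 :=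
    (ComputableRelTo.of_primrec hh).comp
      (((computableRelTo_seg _).comp (.of_primrec (Primrec.fst.comp hunpair))).pair
        (.of_primrec (.pair (Primrec.snd.comp hunpair) .fst)))
  have htrue : Primrec fun l : List Bool => if true ∈ l then 1 else 0 := by
    have hmem : PrimrecPred fun l : List Bool => true ∈ l :=
      (Primrec.eq.comp .id (.const true)).exists_mem_list.of_eq fun l => by simp
    exact Primrec.ite hmem (.const 1) (.const 0)
  refine ⟨fun t e => if true ∈ seg (halts e) t then 1 else 0, ?_, fun e => ?_⟩
  · have hseg : ComputableRelTo (chi X) fun p : ℕ × ℕ => seg (halts p.2) p.1 :=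
      (hhalts.seg.comp (.of_primrec (.pair .snd .fst)) :)
    exact (ComputableRelTo.of_primrec htrue).comp hseg
  · have hmem : e ∈ jump X ↔ ∃ w, halts e w := by
      rw [hjump]
      exact ⟨fun ⟨u, k, hk⟩ => ⟨Nat.pair u k, by simpa [halts] using hk⟩, fun ⟨w, hw⟩ => ⟨_, _, hw⟩⟩
    by_cases he : e ∈ jump X
    · obtain ⟨w, hw⟩ := hmem.1 he
      filter_upwards [eventually_gt_atTop w] with t ht
      rw [if_pos (mem_seg.2 ⟨w, ht, hw⟩), Set.indicator_of_mem he]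
    · refine .of_forall fun t => ?_
      beta_reduce
      rw [if_neg fun ht => he (hmem.2 ((mem_seg.1 ht).imp fun w hw => hw.2)),
        Set.indicator_of_notMem he]

theorem eventually_seg_eq {σ : Type*} {A : ℕ → ℕ → σ} {g : ℕ → σ}
    (hA : ∀ n, ∀ᶠ t in atTop, A t n = g n) (u : ℕ) : ∀ᶠ t in atTop, seg (A t) u = seg g u := by
  filter_upwards [(eventually_all_finset (Finset.range u)).2 fun n _ => hA n] with t ht
  exact List.map_congr_left fun n hn => ht n (by simpa using hn)

/-- A halting computation relative to `X'` queries only a finite part of `X'`, on which the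
approximation of the limit lemma is eventually correct. -/
theorem exists_mem_jump_jump_iff_eventually (X : Set ℕ) : ∃ R : ℕ × ℕ × ℕ → ℕ → Bool,
    ComputableRelTo (chi X) (fun p : (ℕ × ℕ × ℕ) × ℕ => R p.1 p.2) ∧
      ∀ e, e ∈ jump (jump X) ↔ ∃ u k, ∀ᶠ t in atTop, R (e, u, k) t = true := by
  obtain ⟨h, hh, hjump⟩ := exists_stages_jump
  obtain ⟨A, hA, hlim⟩ := exists_eventually_eq_indicator_jump X
  refine ⟨fun z t => h (seg (A t) z.2.1, z.2.2, z.1), ?_, fun e => ?_⟩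
  · have htu : ComputableRelTo (chi X) fun p : (ℕ × ℕ × ℕ) × ℕ => (p.2, p.1.2.1) :=
      .of_primrec (.pair .snd (Primrec.fst.comp (Primrec.snd.comp .fst)))
    have hseg : ComputableRelTo (chi X) fun p : (ℕ × ℕ × ℕ) × ℕ => seg (A p.2) p.1.2.1 :=
      (hA.seg.comp htu :)
    have hke : ComputableRelTo (chi X) fun p : (ℕ × ℕ × ℕ) × ℕ => (p.1.2.2, p.1.1) :=
      .of_primrec (.pair (Primrec.snd.comp (Primrec.snd.comp .fst)) (Primrec.fst.comp .fst))
    have hh' : ComputableRelTo (chi X) h := .of_primrec hh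
    exact (hh'.comp (hseg.pair hke) :)
  · rw [hjump]
    refine exists_congr fun u => exists_congr fun k => ⟨fun hk => ?_, fun hk => ?_⟩
    · filter_upwards [eventually_seg_eq hlim u] with t ht
      rwa [ht]
    · obtain ⟨t, ht, hseg⟩ := (hk.and (eventually_seg_eq hlim u)).exists
      simpa only [hseg] using ht

theorem exists_notMem_jump_jump_iff (X : Set ℕ) : ∃ B : ℕ × ℕ → Part ℕ, PartrecIn (chi X) B ∧
    ∀ e, e ∉ jump (jump X) ↔ ∀ x, B (e, x) = Part.some 0 := by
  obtain ⟨R, hR, hlim⟩ := exists_mem_jump_jump_iff_eventually X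
  let search (e u k s t : ℕ) : Option ℕ := bif R (e, u, k) (s + t) then none else some 0
  let B (p : ℕ × ℕ × ℕ × ℕ) : Part ℕ := Nat.rfindOpt (search p.1 p.2.1 p.2.2.1 p.2.2.2)
  have hB (e u k s : ℕ) : B (e, u, k, s) = Part.some 0 ↔ ∃ t ≥ s, R (e, u, k) t = false := by
    have hsearch {m t : ℕ} : m ∈ search e u k s t ↔ 0 = m ∧ R (e, u, k) (s + t) = false := by
      cases h : R (e, u, k) (s + t) <;> simp [search, h]
    rw [Part.eq_some_iff,
      mem_rfindOpt_iff fun hm hn => (hsearch.1 hm).1.symm.trans (hsearch.1 hn).1]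
    simp only [hsearch, true_and]
    exact ⟨fun ⟨t, ht⟩ => ⟨s + t, Nat.le_add_right s t, ht⟩,
      fun ⟨t, hst, ht⟩ => ⟨t - s, by rwa [Nat.add_sub_cancel' hst]⟩⟩
  have hBcomp : PartrecIn (chi X) B := by
    have hpos : ComputableRelTo (chi X) fun p : (ℕ × ℕ × ℕ × ℕ) × ℕ =>
        ((p.1.1, p.1.2.1, p.1.2.2.1), p.1.2.2.2 + p.2) := by
      have htail : Primrec fun p : (ℕ × ℕ × ℕ × ℕ) × ℕ => p.1.2 := Primrec.snd.comp .fst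
      have hks : Primrec fun p : (ℕ × ℕ × ℕ × ℕ) × ℕ => p.1.2.2 := Primrec.snd.comp htail
      exact .of_primrec (.pair (.pair (Primrec.fst.comp .fst) (.pair (Primrec.fst.comp htail)
        (Primrec.fst.comp hks))) (Primrec.nat_add.comp (Primrec.snd.comp hks) .snd))
    have hcond : ComputableRelTo (chi X) fun b : Bool => bif b then none else some 0 :=
      .of_primrec (Primrec.dom_bool _)
    exact PartrecIn.rfindOpt (hcond.comp (hR.comp hpos) :)
  have hdecode : ComputableRelTo (chi X) fun p : ℕ × ℕ =>
      (p.1, Denumerable.ofNat (ℕ × ℕ × ℕ) p.2) :=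
    .of_primrec (.pair .fst ((Primrec.ofNat _).comp .snd))
  refine ⟨fun p => B (p.1, Denumerable.ofNat (ℕ × ℕ × ℕ) p.2), hBcomp.comp hdecode, fun e => ?_⟩
  calc e ∉ jump (jump X) ↔ ∀ u k s, ∃ t ≥ s, R (e, u, k) t = false := by
        simp [hlim, eventually_atTop]
    _ ↔ ∀ q : ℕ × ℕ × ℕ, B (e, q) = Part.some 0 := by simp [hB]
    _ ↔ _ := (Denumerable.eqv (ℕ × ℕ × ℕ)).symm.surjective.forall

end DoubleJump

theorem stmt15 (X Y : Set ℕ) :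
    (∃ f : Bel X → ℕ, IsPCAEmbedding (bXApp X) (k1App Y) f) ↔
      TuringLE (jump (jump X)) Y := by
  constructor
  · rintro ⟨f, hf⟩
    obtain ⟨B, hB, hmem⟩ := exists_notMem_jump_jump_iff X
    exact turingLE_of_embedding hf hB hmem
  · exact exists_embedding_of_turingLE

end PCAEmb
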